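/- arXiv:1504.06105 — 4 statements merged into one kernel-verified Lean document; each statement's English description precedes it below -/
import Mathlib

section
/- For every word u ∈ List ℚ and every m ∈ ℕ, the insertion of an m-gap at u, ι_u^m, is injective and preserves the prefix order and the lexicographic order in both directions: for all words w, v one has w ≼ v if and only if ι_u^m(w) ≼ ι_u^m(v), and w ⊑ v if and only if ι_u^m(w) ⊑ ι_u^m(v). -/
/-!
Both orders are reflexive closures of a lexicographic extension `List.Lex r`: of `r = (· < ·)` for
the lexicographic order, and of the empty relation for the prefix order, since words ordered by
the latter never branch. It therefore suffices to treat `List.Lex r` for an irreflexive `r`, whose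
comparison of two words looks at the first letters and, if these agree, at the tails. An insertion
at `c :: u` keeps the first letter and acts on the tail according to that letter alone, so two words
with the same first letter have their tails transformed in the same way.
-/

namespace CLTL

/-- A word is a finite sequence of rationals. -/
abbrev Word := List ℚ

/-- Lexicographic order on lists over a linear order: `w ⊑ v` iff `w` is a prefix of `v`,
or they branch at some position with the letter of `w` smaller. -/
def lexLe {α : Type*} [LinearOrder α] (w v : List α) : Prop :=
  w <+: v ∨ ∃ (p : List α) (a b : α), a < b ∧ (p ++ [a]) <+: w ∧ (p ++ [b]) <+: v

/-- Longest common prefix of two lists. -/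
def lcp {α : Type*} [DecidableEq α] : List α → List α → List α
  | a :: w, b :: v => if a = b then a :: lcp w v else []
  | _, _ => []

/-- Iterated longest common prefix of a nonempty list of words. -/
def listLCP : List Word → Word
  | [] => []
  | [x] => x
  | x :: xs => lcp x (listLCP xs)

/-- Insertion of an `m`-gap at `u`. -/
def iota (u : Word) (m : ℕ) (w : Word) : Word :=
  if u <+: w then u ++ List.replicate m 0 ++ w.drop u.length else w

/-- The maximal common ancestor tree of a tuple `w` together with constants `C`:
`{ε}` together with all iterated longest common prefixes of nonempty subsets of entries. -/
def MCAT (C : List Word) {k : ℕ} (w : Fin k → Word) : Set Word :=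
  insert [] { x | ∃ I : Finset (Fin (k + C.length)),
    I.Nonempty ∧ x = listLCP (I.toList.map (Fin.append w C.get)) }

/-- `h` is the induced isomorphism witnessing `typ_C(w) = typ_C(v)`. -/
def IsInducedIso (C : List Word) {k : ℕ} (w v : Fin k → Word) (h : Word → Word) : Prop :=
  Set.BijOn h (MCAT C w) (MCAT C v) ∧
  (∀ x ∈ MCAT C w, ∀ y ∈ MCAT C w,
    (x <+: y ↔ h x <+: h y) ∧ (lexLe x y ↔ lexLe (h x) (h y))) ∧
  (∀ c ∈ C, h c = c) ∧
  (∀ i : Fin k, h (w i) = v i)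

/-- `typ_C(w) = typ_C(v)`. -/
def SameTyp (C : List Word) {k : ℕ} (w v : Fin k → Word) : Prop :=
  ∃ h : Word → Word, IsInducedIso C w v h

/-- The stretching condition on an isomorphism `h` of `MCAT_C(w)`:
`|h e| - |h d| ≥ |e| - |d|` whenever `d` is a proper prefix of `e`. -/
def StretchCond (C : List Word) {k : ℕ} (w : Fin k → Word) (h : Word → Word) : Prop :=
  ∀ d ∈ MCAT C w, ∀ e ∈ MCAT C w, d <+: e → d ≠ e →
    e.length + (h d).length ≤ (h e).length + d.length

/-- `w ≼* v` for tuples of words. -/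
def Stretch (C : List Word) {k : ℕ} (w v : Fin k → Word) : Prop :=
  ∃ h : Word → Word, IsInducedIso C w v h ∧ StretchCond C w h

/-- `≼*` on configurations. -/
def ConfigLe (C : List Word) {Q : Type*} {n : ℕ}
    (c d : Q × (Fin n → Word)) : Prop :=
  c.1 = d.1 ∧ Stretch C c.2 d.2

/-- A transition relation is type-invariant. -/
def TypeInvariant (C : List Word) {Q : Type*} {n : ℕ}
    (step : (Q × (Fin n → Word)) → (Q × (Fin n → Word)) → Prop) : Prop :=
  ∀ (q p : Q) (w v w' v' : Fin n → Word),
    step (q, w) (p, v) → SameTyp C (Fin.append w v) (Fin.append w' v') →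
      step (q, w') (p, v')

/-- Finite runs, indexed by `Fin (N+1)`. -/
def IsFinRun {Q : Type*} {n : ℕ}
    (step : (Q × (Fin n → Word)) → (Q × (Fin n → Word)) → Prop)
    {N : ℕ} (r : Fin (N + 1) → Q × (Fin n → Word)) : Prop :=
  ∀ i : Fin N, step (r i.castSucc) (r i.succ)

/-- Infinite runs. -/
def IsInfRun {Q : Type*} {n : ℕ}
    (step : (Q × (Fin n → Word)) → (Q × (Fin n → Word)) → Prop)
    (r : ℕ → Q × (Fin n → Word)) : Prop :=
  ∀ i : ℕ, step (r i) (r (i + 1))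

/-- The pair `(w, v)` (of tuples of equal type) is contracting. -/
def ContractingPair (C : List Word) {k : ℕ} (w v : Fin k → Word) : Prop :=
  ∃ h : Word → Word, IsInducedIso C w v h ∧
    ((∃ d ∈ MCAT C w, h d <+: d ∧ h d ≠ d) ∨
     (∃ d ∈ MCAT C w, ∃ e ∈ MCAT C w,
        d <+: e ∧ d ≠ e ∧ h e = e ∧ d <+: h d ∧ d ≠ h d))

/-- A set of words `T` has `n`-gaps above `B`. -/
def HasGaps (n : ℕ) (T B : Set Word) : Prop :=
  ∀ d ∈ T, ∀ e ∈ T, d <+: e → d ≠ e → (∀ b ∈ B, ¬ e <+: b) → n + d.length < e.length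

section Lex

variable {α : Type*} {r : α → α → Prop} {w v : List α}

lemma lex_append_cons (w : List α) (a : α) (t : List α) : List.Lex r w (w ++ a :: t) := by
  simpa only [List.append_nil] using List.Lex.append_left r (.nil (a := a) (l := t)) w

lemma lex_append_append_iff [Std.Irrefl r] (p : List α) :
    List.Lex r (p ++ w) (p ++ v) ↔ List.Lex r w v := by
  induction p with
  | nil => rfl
  | cons a p ih => exact List.lex_cons_iff.trans ih

lemma lex_of_branch {p : List α} {a b : α} (hab : r a b) (hw : p ++ [a] <+: w)
    (hv : p ++ [b] <+: v) : List.Lex r w v := by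
  obtain ⟨s, rfl⟩ := hw
  obtain ⟨t, rfl⟩ := hv
  simpa only [List.append_assoc, List.singleton_append] using List.Lex.append_left r (.rel hab) p

lemma eq_or_lex_of_prefix (h : w <+: v) : w = v ∨ List.Lex r w v := by
  obtain ⟨_ | ⟨a, t⟩, rfl⟩ := h
  · exact .inl (List.append_nil w).symm
  · exact .inr (lex_append_cons w a t)

lemma prefix_or_branch_of_lex (h : List.Lex r w v) :
    w <+: v ∨ ∃ p a b, r a b ∧ p ++ [a] <+: w ∧ p ++ [b] <+: v := by
  induction h with
  | nil => exact .inl List.nil_prefix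
  | @rel a _ b _ hab => exact .inr ⟨[], a, b, hab, by simp, by simp⟩
  | @cons c _ _ _ ih =>
    rcases ih with h | ⟨p, a, b, hab, hw, hv⟩
    · exact .inl ((List.prefix_cons_inj c).2 h)
    · exact .inr ⟨c :: p, a, b, hab, (List.prefix_cons_inj c).2 hw, (List.prefix_cons_inj c).2 hv⟩

lemma eq_or_lex_iff_prefix_or_branch :
    w = v ∨ List.Lex r w v ↔ w <+: v ∨ ∃ p a b, r a b ∧ p ++ [a] <+: w ∧ p ++ [b] <+: v := by
  constructor
  · rintro (rfl | h)
    · exact .inl List.prefix_rfl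
    · exact prefix_or_branch_of_lex h
  · rintro (h | ⟨p, a, b, hab, hw, hv⟩)
    · exact eq_or_lex_of_prefix h
    · exact .inr (lex_of_branch hab hw hv)

lemma prefix_iff_eq_or_lex : w <+: v ↔ w = v ∨ List.Lex emptyRelation w v := by
  simp [eq_or_lex_iff_prefix_or_branch, emptyRelation]

lemma lexLe_iff_eq_or_lex [LinearOrder α] : lexLe w v ↔ w = v ∨ List.Lex (· < ·) w v :=
  eq_or_lex_iff_prefix_or_branch.symm

end Lex

section InsertAt

variable {α : Type*} [DecidableEq α]

/-- Insertion of the word `z` at `u`, over any alphabet: the map `u ++ x ↦ u ++ z ++ x`, fixing the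
words that do not extend `u`. The gap insertion `iota u m` is the case of a block `z` of `m`
zeros. -/
def insertAt (u z w : List α) : List α :=
  if u <+: w then u ++ z ++ w.drop u.length else w

lemma insertAt_append (u z x : List α) : insertAt u z (u ++ x) = u ++ z ++ x := by
  simp [insertAt]

lemma insertAt_of_not_prefix {u w : List α} (z : List α) (h : ¬u <+: w) : insertAt u z w = w :=
  if_neg h

lemma insertAt_nil_left (z w : List α) : insertAt [] z w = z ++ w :=
  insertAt_append [] z w

lemma insertAt_cons_nil (c : α) (u z : List α) : insertAt (c :: u) z [] = [] :=
  insertAt_of_not_prefix z (by simp)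

lemma insertAt_cons_cons (c : α) (u z : List α) (a : α) (w : List α) :
    insertAt (c :: u) z (a :: w) = a :: if a = c then insertAt u z w else w := by
  by_cases hac : a = c
  · subst hac
    by_cases h : u <+: w <;> simp [insertAt, h]
  · simp [insertAt, hac, Ne.symm hac]

lemma insertAt_injective (u z : List α) : Function.Injective (insertAt u z) := by
  induction u with
  | nil =>
    intro w v h
    simpa only [insertAt_nil_left, List.append_cancel_left_eq] using h
  | cons c u ih =>
    rintro (_ | ⟨a, w⟩) (_ | ⟨b, v⟩) h
    · rfl
    · simp [insertAt_cons_nil, insertAt_cons_cons] at h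
    · simp [insertAt_cons_nil, insertAt_cons_cons] at h
    · simp only [insertAt_cons_cons, List.cons.injEq] at h
      obtain ⟨rfl, h⟩ := h
      split_ifs at h
      · rw [ih h]
      · rw [h]

lemma lex_insertAt_iff {r : α → α → Prop} [Std.Irrefl r] (u z w v : List α) :
    List.Lex r (insertAt u z w) (insertAt u z v) ↔ List.Lex r w v := by
  induction u generalizing w v with
  | nil => simp only [insertAt_nil_left, lex_append_append_iff]
  | cons c u ih =>
    rcases w with _ | ⟨a, w⟩ <;> rcases v with _ | ⟨b, v⟩
    · simp only [insertAt_cons_nil]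
    · simp only [insertAt_cons_nil, insertAt_cons_cons, List.nil_lex_cons']
    · simp only [insertAt_cons_nil, List.not_lex_nil]
    · simp only [insertAt_cons_cons, List.cons_lex_cons_iff]
      refine or_congr_right (and_congr_right ?_)
      rintro rfl
      split_ifs
      · exact ih w v
      · rfl

lemma eq_or_lex_insertAt_iff {r : α → α → Prop} [Std.Irrefl r] (u z w v : List α) :
    insertAt u z w = insertAt u z v ∨ List.Lex r (insertAt u z w) (insertAt u z v) ↔
      w = v ∨ List.Lex r w v :=
  or_congr (insertAt_injective u z).eq_iff (lex_insertAt_iff u z w v)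

lemma insertAt_prefix_insertAt_iff (u z w v : List α) :
    insertAt u z w <+: insertAt u z v ↔ w <+: v := by
  rw [prefix_iff_eq_or_lex, eq_or_lex_insertAt_iff, prefix_iff_eq_or_lex]

end InsertAt

lemma lexLe_insertAt_iff {α : Type*} [LinearOrder α] (u z w v : List α) :
    lexLe (insertAt u z w) (insertAt u z v) ↔ lexLe w v := by
  rw [lexLe_iff_eq_or_lex, eq_or_lex_insertAt_iff, lexLe_iff_eq_or_lex]

theorem stmt0_general {α : Type*} [LinearOrder α] (u z : List α) :
    Function.Injective (insertAt u z) ∧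
    (∀ w v : List α, w <+: v ↔ insertAt u z w <+: insertAt u z v) ∧
    (∀ w v : List α, lexLe w v ↔ lexLe (insertAt u z w) (insertAt u z v)) :=
  ⟨insertAt_injective u z, fun w v => (insertAt_prefix_insertAt_iff u z w v).symm,
    fun w v => (lexLe_insertAt_iff u z w v).symm⟩

/-- Insertion of an `m`-gap at `u` is injective and preserves the prefix order and the
lexicographic order in both directions. -/
theorem stmt0 (u : Word) (m : ℕ) :
    Function.Injective (iota u m) ∧
    (∀ w v : Word, w <+: v ↔ iota u m w <+: iota u m v) ∧
    (∀ w v : Word, lexLe w v ↔ lexLe (iota u m w) (iota u m v)) :=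
  stmt0_general u (List.replicate m 0)

end CLTL
end

section
/- For every word u ∈ List ℚ and every m ∈ ℕ, the insertion of an m-gap at u commutes with longest common prefixes: for all words w, v one has ι_u^m(w ⊓ v) = ι_u^m(w) ⊓ ι_u^m(v). -/
/-!
If `u` is a prefix of both `w` and `v`, then it is a prefix of `lcp w v`, and the insertion at `u`
replaces the common beginning `u` of all three words by `u` followed by the gap. Otherwise `u` is
not a prefix of `lcp w v`, so the left-hand side is `lcp w v`. If `u` is a prefix of neither word,
both stay unchanged. If it is a prefix of exactly one, then `lcp w v` is a proper prefix of `u`, and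
the insertion, which acts behind `u`, cannot affect it.
-/

namespace CLTL

section Insertion

variable {α : Type*} [DecidableEq α]

theorem prefix_lcp_iff {u w v : List α} : u <+: lcp w v ↔ u <+: w ∧ u <+: v := by
  induction u generalizing w v with
  | nil => simp
  | cons c u ih =>
    cases w with
    | nil => simp [lcp]
    | cons a w =>
      cases v with
      | nil => simp [lcp]
      | cons b v =>
        by_cases hab : a = b
        · subst hab
          simp only [lcp, if_true, List.cons_prefix_cons, ih]
          exact and_and_left
        · simp only [lcp, if_neg hab, List.prefix_nil, List.cons_prefix_cons]
          exact ⟨nofun, fun ⟨⟨hca, _⟩, hcb, _⟩ => absurd (hca.symm.trans hcb) hab⟩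

theorem lcp_comm (w v : List α) : lcp w v = lcp v w :=
  have lcp_prefix_swap (x y : List α) : lcp x y <+: lcp y x :=
    prefix_lcp_iff.2 (prefix_lcp_iff.1 List.prefix_rfl).symm
  (lcp_prefix_swap w v).eq_of_length_le (lcp_prefix_swap v w).length_le

theorem lcp_append_append_left (u x y : List α) : lcp (u ++ x) (u ++ y) = u ++ lcp x y := by
  induction u with
  | nil => rfl
  | cons a u ih => simp [lcp, ih]

theorem lcp_append_left_of_not_prefix {u v : List α} (h : ¬ u <+: v) (x : List α) :
    lcp (u ++ x) v = lcp u v := by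
  induction u generalizing v with
  | nil => exact absurd List.nil_prefix h
  | cons a u ih =>
    cases v with
    | nil => rfl
    | cons b v =>
      by_cases hab : a = b
      · subst hab
        have hu : ¬ u <+: v := fun hu => h (List.cons_prefix_cons.2 ⟨rfl, hu⟩)
        simp only [List.cons_append, lcp, if_true, ih hu]
      · simp only [List.cons_append, lcp, if_neg hab]

/-- Insertion of the block `g` behind the prefix `u`; words that do not start with `u` are left
unchanged. The insertion `iota u m` of an `m`-gap is the case `g = List.replicate m 0`. -/
def insertBlock (u g w : List α) : List α :=
  if u <+: w then u ++ g ++ w.drop u.length else w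

theorem insertBlock_append (u g x : List α) : insertBlock u g (u ++ x) = u ++ g ++ x := by
  simp [insertBlock]

theorem insertBlock_of_not_prefix {u w : List α} (h : ¬ u <+: w) (g : List α) :
    insertBlock u g w = w :=
  if_neg h

theorem lcp_insertBlock_left_of_not_prefix {u v : List α} (h : ¬ u <+: v) (g w : List α) :
    lcp (insertBlock u g w) v = lcp w v := by
  by_cases hw : u <+: w
  · obtain ⟨x, rfl⟩ := hw
    rw [insertBlock_append, List.append_assoc, lcp_append_left_of_not_prefix h,
      lcp_append_left_of_not_prefix h]
  · rw [insertBlock_of_not_prefix hw]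

theorem insertBlock_lcp_of_not_prefix_right {u v : List α} (h : ¬ u <+: v) (g w : List α) :
    insertBlock u g (lcp w v) = lcp (insertBlock u g w) (insertBlock u g v) := by
  have hlcp : ¬ u <+: lcp w v := fun hu => h (prefix_lcp_iff.1 hu).2
  rw [insertBlock_of_not_prefix hlcp, insertBlock_of_not_prefix h,
    lcp_insertBlock_left_of_not_prefix h]

theorem stmt1_general (u g w v : List α) :
    insertBlock u g (lcp w v) = lcp (insertBlock u g w) (insertBlock u g v) := by
  by_cases hv : u <+: v
  · by_cases hw : u <+: w
    · obtain ⟨x, rfl⟩ := hw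
      obtain ⟨y, rfl⟩ := hv
      simp only [lcp_append_append_left, insertBlock_append]
    · rw [lcp_comm w, insertBlock_lcp_of_not_prefix_right hw, lcp_comm]
  · exact insertBlock_lcp_of_not_prefix_right hv g w

end Insertion

/-- Insertion of an `m`-gap at `u` commutes with longest common prefixes. -/
theorem stmt1 (u : Word) (m : ℕ) (w v : Word) :
    iota u m (lcp w v) = lcp (iota u m w) (iota u m v) :=
  stmt1_general u (List.replicate m 0) w v

end CLTL
end

section
/- The relation ≼* on configurations Q × (Fin n → List ℚ) (Q a finite set) is a well-quasi-order: it is reflexive and transitive, and every infinite sequence (c_i)_{i∈ℕ} of configurations contains indices i < j with c_i ≼* c_j. -/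
/-!
The elements of `MCAT C w` are indexed by the subsets of the fixed finite set of entry positions.
When the indexed families of two tuples satisfy the same prefix and lexicographic relations,
matching elements of equal index is the induced isomorphism, and it is stretching as soon as no gap
between comparable elements shrinks. So a configuration is controlled by a state and relations
taking finitely many values, together with a vector of natural numbers of fixed dimension (the
gaps), and Dickson's lemma applies.
-/

namespace CLTL

section Range

variable {ι α β : Type*} {f : ι → α} {g : ι → β}

theorem bijOn_extend_range (hfg : ∀ i j, f i = f j ↔ g i = g j) (e : α → β) :
    Set.BijOn (Function.extend f g e) (Set.range f) (Set.range g) := by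
  have extend_apply (i : ι) : Function.extend f g e (f i) = g i :=
    Function.FactorsThrough.extend_apply (fun i j => (hfg i j).1) e i
  have injOn : Set.InjOn (Function.extend f g e) (Set.range f) := by
    rintro _ ⟨i, rfl⟩ _ ⟨j, rfl⟩ hij
    rw [extend_apply, extend_apply] at hij
    exact (hfg i j).2 hij
  have image_eq : Function.extend f g e '' Set.range f = Set.range g := by
    rw [← Set.range_comp]
    exact congrArg Set.range (funext extend_apply)
  exact image_eq ▸ injOn.bijOn_image

end Range

section Preorder

variable {C : List Word} {k : ℕ} {u v w : Fin k → Word} {g h : Word → Word}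

theorem IsInducedIso.id : IsInducedIso C w w id :=
  ⟨Set.bijOn_id _, fun _ _ _ _ => ⟨Iff.rfl, Iff.rfl⟩, fun _ _ => rfl, fun _ => rfl⟩

theorem IsInducedIso.comp (hh : IsInducedIso C v w h) (hg : IsInducedIso C u v g) :
    IsInducedIso C u w (h ∘ g) := by
  obtain ⟨g_bij, g_order, g_const, g_entry⟩ := hg
  obtain ⟨h_bij, h_order, h_const, h_entry⟩ := hh
  refine ⟨h_bij.comp g_bij, fun x hx y hy => ?_, fun c hc => ?_, fun i => ?_⟩
  · obtain ⟨g_prefix, g_lex⟩ := g_order x hx y hy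
    obtain ⟨h_prefix, h_lex⟩ := h_order (g x) (g_bij.mapsTo hx) (g y) (g_bij.mapsTo hy)
    exact ⟨g_prefix.trans h_prefix, g_lex.trans h_lex⟩
  · rw [Function.comp_apply, g_const c hc, h_const c hc]
  · rw [Function.comp_apply, g_entry, h_entry]

theorem StretchCond.comp (hh : StretchCond C v h) (hg : StretchCond C u g)
    (hiso : IsInducedIso C u v g) : StretchCond C u (h ∘ g) := by
  obtain ⟨g_bij, g_order, -, -⟩ := hiso
  intro d hd e he hde hne
  have g_grows := hg d hd e he hde hne
  have h_grows := hh (g d) (g_bij.mapsTo hd) (g e) (g_bij.mapsTo he)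
    ((g_order d hd e he).1.1 hde) (g_bij.injOn.ne hd he hne)
  simp only [Function.comp_apply]
  omega

theorem Stretch.refl (C : List Word) (w : Fin k → Word) : Stretch C w w :=
  ⟨id, .id, fun _ _ _ _ _ _ => le_rfl⟩

theorem Stretch.trans (huv : Stretch C u v) (hvw : Stretch C v w) : Stretch C u w := by
  obtain ⟨g, g_iso, g_stretch⟩ := huv
  obtain ⟨h, h_iso, h_stretch⟩ := hvw
  exact ⟨h ∘ g, h_iso.comp g_iso, h_stretch.comp g_stretch g_iso⟩

instance isPreorder_configLe (C : List Word) (Q : Type*) (n : ℕ) :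
    IsPreorder (Q × (Fin n → Word)) (ConfigLe C) where
  refl c := ⟨rfl, .refl C c.2⟩
  trans _ _ _ hcd hde := ⟨hcd.1.trans hde.1, hcd.2.trans hde.2⟩

end Preorder

section IndexedFamily

variable {C : List Word} {k : ℕ} {w v : Fin k → Word}

/-- The longest common prefix of the entries of `(w, C)` at the positions in `I`: the indexing of
`MCAT C w` by subsets of positions. Since `listLCP [] = []`, the index `∅` encodes the element
`ε`. -/
noncomputable def mcatElem (C : List Word) (w : Fin k → Word)
    (I : Finset (Fin (k + C.length))) : Word :=
  listLCP (I.toList.map (Fin.append w C.get))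

/-- The prefix and lexicographic relations of the family `mcatElem C w`. This stands in for
`typ_C(w)`, which it determines, as an element of a finite type. -/
def mcatPattern (C : List Word) (w : Fin k → Word) (I J : Finset (Fin (k + C.length))) :
    Prop × Prop :=
  (mcatElem C w I <+: mcatElem C w J, lexLe (mcatElem C w I) (mcatElem C w J))

/-- The gaps `|e| - |d|` of the family `mcatElem C w`. The subtraction is truncated, but only
the pairs with `d ≼ e` matter, where it is the true difference. -/
noncomputable def mcatGap (C : List Word) (w : Fin k → Word) (I J : Finset (Fin (k + C.length))) :
    ℕ :=
  (mcatElem C w J).length - (mcatElem C w I).length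

/-- The map sending the element of `MCAT C w` of each index to the element of `MCAT C v` of the
same index: the induced isomorphism when both tuples have the same `mcatPattern`. An arbitrary
index is chosen where an element has several, and the map is the identity outside `MCAT C w`. -/
noncomputable def mcatMap (C : List Word) (w v : Fin k → Word) : Word → Word :=
  Function.extend (mcatElem C w) (mcatElem C v) id

theorem mcat_eq_range_mcatElem (C : List Word) (w : Fin k → Word) :
    MCAT C w = Set.range (mcatElem C w) := by
  have mcatElem_empty : mcatElem C w ∅ = [] := by simp [mcatElem, listLCP]
  ext x
  constructor
  · rintro (rfl | ⟨I, -, rfl⟩)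
    · exact ⟨∅, mcatElem_empty⟩
    · exact ⟨I, rfl⟩
  · rintro ⟨I, rfl⟩
    rcases I.eq_empty_or_nonempty with rfl | hI
    · exact Or.inl mcatElem_empty
    · exact Or.inr ⟨I, hI, rfl⟩

theorem mcatElem_singleton (C : List Word) (w : Fin k → Word) (i : Fin (k + C.length)) :
    mcatElem C w {i} = Fin.append w C.get i := by
  simp [mcatElem, listLCP]

theorem mcatElem_prefix_iff (hpat : mcatPattern C w = mcatPattern C v)
    (I J : Finset (Fin (k + C.length))) :
    mcatElem C w I <+: mcatElem C w J ↔ mcatElem C v I <+: mcatElem C v J :=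
  iff_of_eq (congrArg Prod.fst (congrFun₂ hpat I J))

theorem lexLe_mcatElem_iff (hpat : mcatPattern C w = mcatPattern C v)
    (I J : Finset (Fin (k + C.length))) :
    lexLe (mcatElem C w I) (mcatElem C w J) ↔ lexLe (mcatElem C v I) (mcatElem C v J) :=
  iff_of_eq (congrArg Prod.snd (congrFun₂ hpat I J))

theorem mcatElem_eq_iff (hpat : mcatPattern C w = mcatPattern C v)
    (I J : Finset (Fin (k + C.length))) :
    mcatElem C w I = mcatElem C w J ↔ mcatElem C v I = mcatElem C v J := by
  simp only [← antisymm_iff (r := fun x y : Word => x <+: y), mcatElem_prefix_iff hpat]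

theorem mcatMap_mcatElem (hpat : mcatPattern C w = mcatPattern C v)
    (I : Finset (Fin (k + C.length))) : mcatMap C w v (mcatElem C w I) = mcatElem C v I :=
  Function.FactorsThrough.extend_apply (fun I J => (mcatElem_eq_iff hpat I J).1) id I

theorem isInducedIso_mcatMap (hpat : mcatPattern C w = mcatPattern C v) :
    IsInducedIso C w v (mcatMap C w v) := by
  refine ⟨?_, ?_, fun c hc => ?_, fun i => ?_⟩
  · rw [mcat_eq_range_mcatElem, mcat_eq_range_mcatElem]
    exact bijOn_extend_range (mcatElem_eq_iff hpat) id
  · rw [mcat_eq_range_mcatElem]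
    rintro _ ⟨I, rfl⟩ _ ⟨J, rfl⟩
    rw [mcatMap_mcatElem hpat, mcatMap_mcatElem hpat]
    exact ⟨mcatElem_prefix_iff hpat I J, lexLe_mcatElem_iff hpat I J⟩
  · obtain ⟨i, rfl⟩ := List.get_of_mem hc
    simpa only [mcatElem_singleton, Fin.append_right] using
      mcatMap_mcatElem hpat {Fin.natAdd k i}
  · simpa only [mcatElem_singleton, Fin.append_left] using
      mcatMap_mcatElem hpat {Fin.castAdd C.length i}

theorem stretchCond_mcatMap (hpat : mcatPattern C w = mcatPattern C v)
    (hgap : mcatGap C w ≤ mcatGap C v) : StretchCond C w (mcatMap C w v) := by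
  rw [StretchCond, mcat_eq_range_mcatElem]
  rintro _ ⟨I, rfl⟩ _ ⟨J, rfl⟩ hIJ -
  have length_le_w := hIJ.length_le
  have length_le_v := ((mcatElem_prefix_iff hpat I J).1 hIJ).length_le
  have gap_le : (mcatElem C w J).length - (mcatElem C w I).length ≤
      (mcatElem C v J).length - (mcatElem C v I).length := hgap I J
  rw [mcatMap_mcatElem hpat, mcatMap_mcatElem hpat]
  omega

end IndexedFamily

theorem wellQuasiOrdered_stretch (C : List Word) (k : ℕ) :
    WellQuasiOrdered (Stretch C (k := k)) := by
  intro f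
  obtain ⟨i, j, hij, hpat, hgap⟩ :=
    ((Finite.wellQuasiOrdered Eq).prod wellQuasiOrdered_le)
      fun t => (mcatPattern C (f t), mcatGap C (f t))
  exact ⟨i, j, hij, mcatMap C (f i) (f j), isInducedIso_mcatMap hpat,
    stretchCond_mcatMap hpat hgap⟩

theorem stmt4_general (C : List Word) (Q : Type*) [Finite Q] (n : ℕ) :
    IsPreorder (Q × (Fin n → Word)) (ConfigLe C) ∧
      WellQuasiOrdered (ConfigLe C (Q := Q) (n := n)) :=
  ⟨isPreorder_configLe C Q n, (Finite.wellQuasiOrdered Eq).prod (wellQuasiOrdered_stretch C n)⟩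

/-- `≼*` on configurations over a finite state set is a well-quasi-order: it is reflexive,
transitive, and every infinite sequence of configurations contains an increasing pair. -/
theorem stmt4 (C : List Word) (hC : ∀ c ∈ C, ∀ c' : Word, c' <+: c → c' ∈ C)
    {Q : Type*} [Fintype Q] {n : ℕ} :
    (∀ c : Q × (Fin n → Word), ConfigLe C c c) ∧
    (∀ c d e : Q × (Fin n → Word), ConfigLe C c d → ConfigLe C d e → ConfigLe C c e) ∧
    (∀ f : ℕ → Q × (Fin n → Word), ∃ i j : ℕ, i < j ∧ ConfigLe C (f i) (f j)) := by
  obtain ⟨hpre, hwqo⟩ := stmt4_general C Q n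
  exact ⟨hpre.refl, hpre.trans, hwqo⟩

end CLTL
end

section
/- Let → be a type-invariant transition relation. Then → and its inverse are strongly upward compatible with respect to ≼*: (i) if c → d and c ≼* c', then there exists d' with d ≼* d' and c' → d'; (ii) if c → d and d ≼* d', then there exists c' with c ≼* c' and c' → d'. -/
/-!
Call a self-map of the tree of words a *tree embedding* if it fixes the root and sends the children
of each node above distinct children of the image node, in the same left-to-right order. Such a map
preserves longest common prefixes and `⊑`, and it never shrinks distances. Hence a tree embedding
`g` fixing the constants satisfies `u ≼* g ∘ u` and `typ_C(w, v) = typ_C(g ∘ w, g ∘ v)` for *all*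
tuples, so a type-invariant relation contains `(q, g ∘ w) → (p, g ∘ v)` along with
`(q, w) → (p, v)`. It remains to see that the isomorphism `h` induced by `w ≼* w'` extends from
`S = MCAT_C(w)` to a tree embedding.

The extension is built letter by letter. Suppose `y` has already been sent to `v`. For every
`e ∈ S` properly above `y`, the word `h e` is properly above `v`, and the letter at which it leaves
`v` depends only on the letter at which `e` leaves `y`, in an order-preserving way, because `S` is
closed under longest common prefixes and `h` respects these and `⊑`. This finite partial map on
letters extends to a strictly increasing `φ : ℚ → ℚ`. A child `y ++ [b]` is then sent to
`v ++ [φ b]`, unless it lies in `S`, in which case it is sent to `h (y ++ [b])`, and all additional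
letters required by the stretching are inserted at this point.
-/

namespace CLTL

/-! ### Longest common prefixes and the lexicographic order -/

section Lists

variable {α : Type*}

theorem eq_of_concat_prefix {p x : List α} {a b : α} (ha : p ++ [a] <+: x) (hb : p ++ [b] <+: x) :
    a = b := by
  have h := (List.prefix_of_prefix_length_le ha hb (by simp)).eq_of_length (by simp)
  simpa using h

theorem exists_concat_prefix {p x : List α} (h : p <+: x) (hlt : p.length < x.length) :
    ∃ a, p ++ [a] <+: x := by
  obtain ⟨_ | ⟨a, t⟩, rfl⟩ := h
  · simp at hlt
  · exact ⟨a, t, by simp⟩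

theorem not_prefix_of_branch {p x y : List α} {a b : α} (hab : a ≠ b)
    (ha : p ++ [a] <+: x) (hb : p ++ [b] <+: y) : ¬ x <+: y :=
  fun h => hab (eq_of_concat_prefix (ha.trans h) hb)

section LongestCommonPrefix

variable [DecidableEq α] {p x y z : List α}

theorem prefix_lcp_iff_s5 : z <+: lcp x y ↔ z <+: x ∧ z <+: y := by
  induction x generalizing y z <;> cases y <;> cases z <;> grind [lcp]

theorem lcp_prefix_left (x y : List α) : lcp x y <+: x :=
  (prefix_lcp_iff_s5.1 List.prefix_rfl).1

theorem lcp_prefix_right (x y : List α) : lcp x y <+: y :=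
  (prefix_lcp_iff_s5.1 List.prefix_rfl).2

theorem lcp_eq_of_forall_prefix_iff (h : ∀ z, z <+: p ↔ z <+: x ∧ z <+: y) : lcp x y = p :=
  antisymm ((h _).2 (prefix_lcp_iff_s5.1 List.prefix_rfl))
    (prefix_lcp_iff_s5.2 ((h _).1 List.prefix_rfl))

theorem lcp_eq_left (h : x <+: y) : lcp x y = x :=
  lcp_eq_of_forall_prefix_iff fun _ => ⟨fun hz => ⟨hz, hz.trans h⟩, And.left⟩

theorem lcp_eq_right (h : y <+: x) : lcp x y = y :=
  lcp_eq_of_forall_prefix_iff fun _ => ⟨fun hz => ⟨hz.trans h, hz⟩, And.right⟩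

theorem lcp_eq_of_branch {a b : α} (hab : a ≠ b) (ha : p ++ [a] <+: x) (hb : p ++ [b] <+: y) :
    lcp x y = p := by
  have hp : p <+: lcp x y :=
    prefix_lcp_iff_s5.2 ⟨(List.prefix_append p [a]).trans ha, (List.prefix_append p [b]).trans hb⟩
  by_contra hne
  have hlt : p.length < (lcp x y).length :=
    hp.length_le.lt_of_ne fun hlen => hne (hp.eq_of_length hlen).symm
  obtain ⟨c, hc⟩ := exists_concat_prefix hp hlt
  have hac : a = c := eq_of_concat_prefix ha (hc.trans (lcp_prefix_left x y))
  have hbc : b = c := eq_of_concat_prefix hb (hc.trans (lcp_prefix_right x y))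
  exact hab (hac.trans hbc.symm)

end LongestCommonPrefix

theorem prefix_or_prefix_or_branch (x y : List α) : x <+: y ∨ y <+: x ∨
    ∃ (p : List α) (a b : α), a ≠ b ∧ p ++ [a] <+: x ∧ p ++ [b] <+: y := by
  classical
  rcases (lcp_prefix_left x y).length_le.eq_or_lt with hx | hx
  · exact .inl ((lcp_prefix_left x y).eq_of_length hx ▸ lcp_prefix_right x y)
  rcases (lcp_prefix_right x y).length_le.eq_or_lt with hy | hy
  · exact .inr (.inl ((lcp_prefix_right x y).eq_of_length hy ▸ lcp_prefix_left x y))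
  obtain ⟨a, ha⟩ := exists_concat_prefix (lcp_prefix_left x y) hx
  obtain ⟨b, hb⟩ := exists_concat_prefix (lcp_prefix_right x y) hy
  refine .inr (.inr ⟨lcp x y, a, b, ?_, ha, hb⟩)
  rintro rfl
  simpa using (prefix_lcp_iff_s5.2 ⟨ha, hb⟩).length_le

section LexicographicOrder

variable [LinearOrder α] {x y : List α}

theorem lexLe_iff_of_branch {p : List α} {a b : α} (hab : a ≠ b)
    (ha : p ++ [a] <+: x) (hb : p ++ [b] <+: y) : lexLe x y ↔ a < b := by
  refine ⟨?_, fun h => .inr ⟨p, a, b, h, ha, hb⟩⟩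
  rintro (h | ⟨p', a', b', hab', ha', hb'⟩)
  · exact absurd h (not_prefix_of_branch hab ha hb)
  · obtain rfl : p = p' := (lcp_eq_of_branch hab ha hb).symm.trans
      (lcp_eq_of_branch hab'.ne ha' hb')
    rwa [eq_of_concat_prefix ha ha', eq_of_concat_prefix hb hb']

theorem lexLe_iff_eq_of_prefix (hyx : y <+: x) : lexLe x y ↔ x = y := by
  constructor
  · rintro (hxy | ⟨p, a, b, hab, ha, hb⟩)
    · exact antisymm hxy hyx
    · exact absurd hyx (not_prefix_of_branch hab.ne' hb ha)
  · rintro rfl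
    exact .inl List.prefix_rfl

end LexicographicOrder

end Lists

theorem prefix_listLCP_iff {x : Word} {l : List Word} (hl : l ≠ []) :
    x <+: listLCP l ↔ ∀ a ∈ l, x <+: a := by
  induction l with
  | nil => exact absurd rfl hl
  | cons a l ih =>
    cases l with
    | nil => simp [listLCP]
    | cons b l => simp [listLCP, prefix_lcp_iff_s5, ih]

/-! ### Tree embeddings -/

/-- A tree embedding: a map of words that fixes the root and sends the children of a node `y` above
distinct children of `g y`, in the same left-to-right order. The image of a child may lie
arbitrarily high above the corresponding child of `g y`. -/
structure IsTreeEmb {α β : Type*} [Preorder α] [Preorder β] (g : List α → List β) : Prop where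
  map_nil : g [] = []
  exists_strictMono : ∀ y, ∃ φ : α → β, StrictMono φ ∧ ∀ b, g y ++ [φ b] <+: g (y ++ [b])

namespace IsTreeEmb

section Preorder

variable {α β : Type*} [Preorder α] [Preorder β] {g : List α → List β} {x y : List α}

theorem prefix_append (hg : IsTreeEmb g) (x z : List α) : g x <+: g (x ++ z) := by
  induction z using List.reverseRecOn with
  | nil => simp
  | append_singleton z b ih =>
    obtain ⟨φ, -, hφ⟩ := hg.exists_strictMono (x ++ z)
    rw [← List.append_assoc]
    exact (ih.trans (List.prefix_append _ _)).trans (hφ b)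

theorem map_prefix (hg : IsTreeEmb g) (h : x <+: y) : g x <+: g y := by
  obtain ⟨z, rfl⟩ := h
  exact hg.prefix_append x z

theorem length_add_length_le (hg : IsTreeEmb g) (h : x <+: y) :
    y.length + (g x).length ≤ (g y).length + x.length := by
  obtain ⟨z, rfl⟩ := h
  induction z using List.reverseRecOn with
  | nil => simp [add_comm]
  | append_singleton z b ih =>
    obtain ⟨φ, -, hφ⟩ := hg.exists_strictMono (x ++ z)
    have hlen := (hφ b).length_le
    simp only [List.length_append, List.length_singleton, ← List.append_assoc] at ih hlen ⊢
    omega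

theorem exists_strictMono_branch (hg : IsTreeEmb g) {p : List α} {a b : α}
    (ha : p ++ [a] <+: x) (hb : p ++ [b] <+: y) :
    ∃ φ : α → β, StrictMono φ ∧ g p ++ [φ a] <+: g x ∧ g p ++ [φ b] <+: g y := by
  obtain ⟨φ, hmono, hφ⟩ := hg.exists_strictMono p
  exact ⟨φ, hmono, (hφ a).trans (hg.map_prefix ha), (hφ b).trans (hg.map_prefix hb)⟩

end Preorder

section LinearOrder

variable {α β : Type*} [LinearOrder α] [LinearOrder β] {g : List α → List β} {x y : List α}

theorem prefix_iff (hg : IsTreeEmb g) : g x <+: g y ↔ x <+: y := by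
  refine ⟨fun h => ?_, hg.map_prefix⟩
  rcases prefix_or_prefix_or_branch x y with hxy | hyx | ⟨p, a, b, hab, ha, hb⟩
  · exact hxy
  · have hlen : x.length ≤ y.length := by
      have := hg.length_add_length_le hyx
      have := h.length_le
      omega
    rw [hyx.eq_of_length_le hlen]
  · obtain ⟨φ, hφ, ha', hb'⟩ := hg.exists_strictMono_branch ha hb
    exact absurd h (not_prefix_of_branch (hφ.injective.ne hab) ha' hb')

theorem injective (hg : IsTreeEmb g) : Function.Injective g := fun _ _ h =>
  antisymm (hg.prefix_iff.1 (h ▸ List.prefix_rfl)) (hg.prefix_iff.1 (h ▸ List.prefix_rfl))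

theorem lexLe_iff (hg : IsTreeEmb g) : lexLe (g x) (g y) ↔ lexLe x y := by
  rcases prefix_or_prefix_or_branch x y with hxy | hyx | ⟨p, a, b, hab, ha, hb⟩
  · exact iff_of_true (.inl (hg.map_prefix hxy)) (.inl hxy)
  · rw [lexLe_iff_eq_of_prefix hyx, lexLe_iff_eq_of_prefix (hg.map_prefix hyx), hg.injective.eq_iff]
  · obtain ⟨φ, hφ, ha', hb'⟩ := hg.exists_strictMono_branch ha hb
    rw [lexLe_iff_of_branch hab ha hb, lexLe_iff_of_branch (hφ.injective.ne hab) ha' hb',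
      hφ.lt_iff_lt]

theorem map_lcp (hg : IsTreeEmb g) (x y : List α) : g (lcp x y) = lcp (g x) (g y) := by
  rcases prefix_or_prefix_or_branch x y with hxy | hyx | ⟨p, a, b, hab, ha, hb⟩
  · rw [lcp_eq_left hxy, lcp_eq_left (hg.map_prefix hxy)]
  · rw [lcp_eq_right hyx, lcp_eq_right (hg.map_prefix hyx)]
  · obtain ⟨φ, hφ, ha', hb'⟩ := hg.exists_strictMono_branch ha hb
    rw [lcp_eq_of_branch hab ha hb, lcp_eq_of_branch (hφ.injective.ne hab) ha' hb']

end LinearOrder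

theorem map_listLCP {g : Word → Word} (hg : IsTreeEmb g) (l : List Word) :
    g (listLCP l) = listLCP (l.map g) := by
  induction l with
  | nil => exact hg.map_nil
  | cons a l ih =>
    cases l with
    | nil => simp [listLCP]
    | cons b l => simpa [listLCP, hg.map_lcp] using congrArg (lcp (g a)) ih

end IsTreeEmb

theorem exists_isTreeEmb_of_forall_children {α β : Type*} [Preorder α] [Preorder β]
    {P : List α → List β → Prop} (hnil : P [] [])
    (hchildren : ∀ y v, P y v →
      ∃ φ : α → β, StrictMono φ ∧ ∀ b, ∃ v', v ++ [φ b] <+: v' ∧ P (y ++ [b]) v') :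
    ∃ g, IsTreeEmb g ∧ ∀ x, P x (g x) := by
  choose φ hφ child hchild hP using hchildren
  let g (x : List α) : {v // P x v} := x.reverseRecOn ⟨[], hnil⟩ fun y b v =>
    ⟨child y v v.2 b, hP y v v.2 b⟩
  have g_nil : (g []).1 = [] := by simp [g]
  have g_concat (y b) : (g (y ++ [b])).1 = child y (g y) (g y).2 b := by simp [g]
  exact ⟨fun x => g x, ⟨g_nil, fun y => ⟨φ y (g y) (g y).2, hφ _ _ _, fun b =>
    g_concat y b ▸ hchild y (g y) (g y).2 b⟩⟩, fun x => (g x).2⟩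

/-! ### Extending finite strictly increasing maps -/

section Cantor

variable {α β : Type*} [LinearOrder α] [LinearOrder β] [Countable α] [DenselyOrdered β]
  [NoMinOrder β] [NoMaxOrder β] [Nonempty β]

theorem exists_strictMono_of_partialIso (p : Order.PartialIso α β) :
    ∃ φ : α → β, StrictMono φ ∧ ∀ x ∈ p.val, φ x.1 = x.2 := by
  cases nonempty_encodable α
  let I : Order.Ideal (Order.PartialIso α β) :=
    Order.idealOfCofinals p (Order.PartialIso.definedAtLeft β)
  let F a := Order.PartialIso.funOfIdeal a I (Order.cofinal_meets_idealOfCofinals _ _ a)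
  have cmp_eq {q₁ q₂} (h₁ : q₁ ∈ I) (h₂ : q₂ ∈ I) {x y} (hx : x ∈ q₁.val) (hy : y ∈ q₂.val) :
      cmp x.1 y.1 = cmp x.2 y.2 := by
    obtain ⟨q, -, hq₁, hq₂⟩ := I.directed _ h₁ _ h₂
    exact q.prop _ (hq₁ hx) _ (hq₂ hy)
  refine ⟨fun a => F a, fun a b hab => ?_, fun x hx => ?_⟩
  · obtain ⟨q₁, h₁, ha⟩ := (F a).prop
    obtain ⟨q₂, h₂, hb⟩ := (F b).prop
    exact (lt_iff_lt_of_cmp_eq_cmp (cmp_eq h₁ h₂ ha hb)).1 hab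
  · obtain ⟨q, hq, hx'⟩ := (F x.1).prop
    exact (eq_iff_eq_of_cmp_eq_cmp (cmp_eq hq (Order.mem_idealOfCofinals _ _) hx' hx)).1 rfl

theorem exists_strictMono_eqOn {A : Set α} (hA : A.Finite) {f : α → β} (hf : StrictMonoOn f A) :
    ∃ φ : α → β, StrictMono φ ∧ Set.EqOn φ f A := by
  classical
  let p : Order.PartialIso α β := ⟨hA.toFinset.image fun a => (a, f a), by
    simp only [Finset.forall_mem_image, Set.Finite.mem_toFinset]
    exact fun a ha b hb => (hf.cmp_map_eq ha hb).symm⟩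
  obtain ⟨φ, hφ, hp⟩ := exists_strictMono_of_partialIso p
  exact ⟨φ, hφ, fun a ha => hp (a, f a) (Finset.mem_image_of_mem _ (hA.mem_toFinset.2 ha))⟩

end Cantor

/-! ### Extending stretching homomorphisms to tree embeddings -/

section Extension

variable {α β : Type*}

/-- A set of words containing the root and closed under longest common prefixes, as `MCAT` is: the
domains of the partial tree embeddings considered here. -/
structure IsMeetTree [DecidableEq α] (S : Set (List α)) : Prop where
  nil_mem : [] ∈ S
  lcp_mem : ∀ x ∈ S, ∀ y ∈ S, lcp x y ∈ S

/-- A stretching homomorphism on `S`: the properties of an isomorphism witnessing `≼*` that allow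
extending it to a tree embedding. -/
structure IsStretchingHom [LinearOrder α] [LinearOrder β] (S : Set (List α))
    (h : List α → List β) : Prop where
  map_nil : h [] = []
  map_lcp : ∀ x ∈ S, ∀ y ∈ S, h (lcp x y) = lcp (h x) (h y)
  map_lexLe : ∀ x ∈ S, ∀ y ∈ S, lexLe x y → lexLe (h x) (h y)
  length_add_length_le : ∀ x ∈ S, ∀ y ∈ S, x <+: y →
    y.length + (h x).length ≤ (h y).length + x.length

/-- `v` is an admissible image of `x` under a tree embedding that extends `h` from `S`: it leaves
enough room below `h e` for the part of each `e ∈ S` above `x`. -/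
structure IsAdmissible (S : Set (List α)) (h : List α → List β) (x : List α) (v : List β) :
    Prop where
  eq_of_mem : x ∈ S → v = h x
  prefix_map : ∀ e ∈ S, x <+: e → v <+: h e
  length_add_length_le : ∀ e ∈ S, x <+: e → e.length + v.length ≤ (h e).length + x.length

/-- The letters leading from `y` to its children in the tree spanned by `S`; these are the letters
whose images at `y` are forced by a map on `S`. -/
def childLetters (S : Set (List α)) (y : List α) : Set α :=
  {b | ∃ e ∈ S, y ++ [b] <+: e}

variable {S : Set (List α)} {h : List α → List β} {y : List α} {v : List β}

theorem finite_childLetters (hS : S.Finite) (y : List α) : (childLetters S y).Finite := by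
  have hfin : ((fun e : List α => e[y.length]?) '' S).Finite := hS.image _
  refine (hfin.preimage (Option.some_injective α).injOn).subset ?_
  rintro b ⟨_, he, t, rfl⟩
  exact ⟨_, he, by simp⟩

theorem IsAdmissible.exists_concat_prefix_map (hv : IsAdmissible S h y v) {b : α} {e : List α}
    (he : e ∈ S) (hye : y ++ [b] <+: e) : ∃ b', v ++ [b'] <+: h e := by
  have hy : y <+: e := (List.prefix_append y [b]).trans hye
  refine exists_concat_prefix (hv.prefix_map e he hy) ?_
  have hroom := hv.length_add_length_le e he hy
  have hlen := hye.length_le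
  simp only [List.length_append, List.length_singleton] at hlen
  omega

variable [LinearOrder α] [LinearOrder β]

theorem IsStretchingHom.map_prefix (hh : IsStretchingHom S h) {x y : List α} (hx : x ∈ S)
    (hy : y ∈ S) (hxy : x <+: y) : h x <+: h y := by
  rw [← lcp_eq_left hxy, hh.map_lcp x hx y hy]
  exact lcp_prefix_right _ _

theorem IsStretchingHom.isAdmissible_nil (hh : IsStretchingHom S h) (hS : IsMeetTree S) :
    IsAdmissible S h [] [] where
  eq_of_mem _ := hh.map_nil.symm
  prefix_map _ _ _ := List.nil_prefix
  length_add_length_le e he hne := by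
    simpa [hh.map_nil] using hh.length_add_length_le [] hS.nil_mem e he hne

theorem IsStretchingHom.isAdmissible_map (hh : IsStretchingHom S h) {x : List α} (hx : x ∈ S) :
    IsAdmissible S h x (h x) where
  eq_of_mem _ := rfl
  prefix_map _ he hxe := hh.map_prefix hx he hxe
  length_add_length_le e he hxe := hh.length_add_length_le x hx e he hxe

namespace IsAdmissible

theorem exists_letter (hv : IsAdmissible S h y v) (hh : IsStretchingHom S h) (hS : IsMeetTree S)
    {b : α} (hb : b ∈ childLetters S y) : ∃ b', ∀ e ∈ S, y ++ [b] <+: e → v ++ [b'] <+: h e := by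
  obtain ⟨e₀, he₀, hye₀⟩ := hb
  obtain ⟨b', hb'⟩ := hv.exists_concat_prefix_map he₀ hye₀
  refine ⟨b', fun e he hye => ?_⟩
  have hm := hS.lcp_mem e₀ he₀ e he
  obtain ⟨c, hc⟩ := hv.exists_concat_prefix_map hm (prefix_lcp_iff_s5.2 ⟨hye₀, hye⟩)
  have hcb : c = b' :=
    eq_of_concat_prefix (hc.trans (hh.map_prefix hm he₀ (lcp_prefix_left e₀ e))) hb'
  exact hcb ▸ hc.trans (hh.map_prefix hm he (lcp_prefix_right e₀ e))

theorem strictMonoOn_childLetters (hv : IsAdmissible S h y v) (hh : IsStretchingHom S h)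
    (hS : IsMeetTree S) {f : α → β}
    (hf : ∀ b ∈ childLetters S y, ∀ e ∈ S, y ++ [b] <+: e → v ++ [f b] <+: h e) :
    StrictMonoOn f (childLetters S y) := by
  rintro a ⟨d, hd, hyd⟩ b ⟨e, he, hye⟩ hab
  have hfa := hf a ⟨d, hd, hyd⟩ d hd hyd
  have hfb := hf b ⟨e, he, hye⟩ e he hye
  have hlcp : lcp d e = y := lcp_eq_of_branch hab.ne hyd hye
  have hv_eq : v = lcp (h d) (h e) := by
    rw [← hh.map_lcp d hd e he, hlcp]
    exact hv.eq_of_mem (hlcp ▸ hS.lcp_mem d hd e he)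
  have hne : f a ≠ f b := fun heq => by
    have hlong : v ++ [f a] <+: v := by
      nth_rw 2 [hv_eq]
      exact prefix_lcp_iff_s5.2 ⟨hfa, heq ▸ hfb⟩
    simpa using hlong.length_le
  rw [← lexLe_iff_of_branch hne hfa hfb]
  exact hh.map_lexLe d hd e he ((lexLe_iff_of_branch hab.ne hyd hye).2 hab)

theorem exists_child (hv : IsAdmissible S h y v) (hh : IsStretchingHom S h) {b : α} {b' : β}
    (hb' : ∀ e ∈ S, y ++ [b] <+: e → v ++ [b'] <+: h e) :
    ∃ v', v ++ [b'] <+: v' ∧ IsAdmissible S h (y ++ [b]) v' := by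
  by_cases hyb : y ++ [b] ∈ S
  · exact ⟨h (y ++ [b]), hb' _ hyb List.prefix_rfl, hh.isAdmissible_map hyb⟩
  · refine ⟨v ++ [b'], List.prefix_rfl, fun hmem => absurd hmem hyb, hb', fun e he hye => ?_⟩
    have := hv.length_add_length_le e he ((List.prefix_append y [b]).trans hye)
    simp only [List.length_append, List.length_singleton]
    omega

variable [Countable α] [DenselyOrdered β] [NoMinOrder β] [NoMaxOrder β] [Nonempty β]

theorem exists_strictMono (hv : IsAdmissible S h y v) (hh : IsStretchingHom S h)
    (hS : IsMeetTree S) (hfin : S.Finite) :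
    ∃ φ : α → β, StrictMono φ ∧ ∀ b, ∀ e ∈ S, y ++ [b] <+: e → v ++ [φ b] <+: h e := by
  have hletter (b) (hb : b ∈ childLetters S y) := hv.exists_letter hh hS hb
  choose! f hf using hletter
  obtain ⟨φ, hφ, heq⟩ := exists_strictMono_eqOn (finite_childLetters hfin y)
    (hv.strictMonoOn_childLetters hh hS hf)
  refine ⟨φ, hφ, fun b e he hye => ?_⟩
  have hb : b ∈ childLetters S y := ⟨e, he, hye⟩
  exact heq hb ▸ hf b hb e he hye

end IsAdmissible

theorem IsStretchingHom.exists_isTreeEmb_eqOn [Countable α] [DenselyOrdered β] [NoMinOrder β]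
    [NoMaxOrder β] [Nonempty β] (hh : IsStretchingHom S h) (hS : IsMeetTree S) (hfin : S.Finite) :
    ∃ g, IsTreeEmb g ∧ Set.EqOn g h S := by
  obtain ⟨g, hg, hadm⟩ := exists_isTreeEmb_of_forall_children (hh.isAdmissible_nil hS)
    fun y v hv => by
      obtain ⟨φ, hφ, hletter⟩ := hv.exists_strictMono hh hS hfin
      exact ⟨φ, hφ, fun b => hv.exists_child hh (hletter b)⟩
  exact ⟨g, hg, fun x hx => (hadm x).eq_of_mem hx⟩

end Extension

/-! ### Types of tuples -/

section MCAT

variable (C : List Word) {k : ℕ} (w : Fin k → Word)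

theorem finite_MCAT : (MCAT C w).Finite := by
  refine ((Set.finite_range fun I : Finset (Fin (k + C.length)) =>
    listLCP (I.toList.map (Fin.append w C.get))).subset ?_).insert _
  rintro _ ⟨I, -, rfl⟩
  exact ⟨I, rfl⟩

theorem append_mem_MCAT (i : Fin (k + C.length)) : Fin.append w C.get i ∈ MCAT C w :=
  .inr ⟨{i}, by simp, by simp [listLCP]⟩

theorem apply_mem_MCAT (i : Fin k) : w i ∈ MCAT C w := by
  simpa using append_mem_MCAT C w (Fin.castAdd _ i)

theorem const_mem_MCAT {c : Word} (hc : c ∈ C) : c ∈ MCAT C w := by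
  obtain ⟨i, rfl⟩ := List.mem_iff_get.1 hc
  simpa using append_mem_MCAT C w (Fin.natAdd _ i)

theorem isMeetTree_MCAT : IsMeetTree (MCAT C w) where
  nil_mem := Set.mem_insert _ _
  lcp_mem x hx y hy := by
    rcases hx with rfl | ⟨I, hI, rfl⟩
    · exact .inl (lcp_eq_left List.nil_prefix)
    rcases hy with rfl | ⟨J, hJ, rfl⟩
    · exact .inl (lcp_eq_right List.nil_prefix)
    refine .inr ⟨I ∪ J, hI.inl, lcp_eq_of_forall_prefix_iff fun z => ?_⟩
    rw [prefix_listLCP_iff (by simpa using hI.inl.ne_empty),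
      prefix_listLCP_iff (by simpa using hI.ne_empty),
      prefix_listLCP_iff (by simpa using hJ.ne_empty)]
    simp only [List.forall_mem_map, Finset.mem_toList, Finset.forall_mem_union]

end MCAT

section InducedIso

variable {C : List Word} {k : ℕ} {w v : Fin k → Word} {h : Word → Word}

theorem IsInducedIso.map_nil (hh : IsInducedIso C w v h) : h [] = [] := by
  obtain ⟨hbij, hiso, -, -⟩ := hh
  obtain ⟨s, hs, hs_nil⟩ := hbij.surjOn (isMeetTree_MCAT C v).nil_mem
  have hprefix : h [] <+: h s := (hiso _ (isMeetTree_MCAT C w).nil_mem s hs).1.1 List.nil_prefix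
  exact List.prefix_nil.1 (hs_nil ▸ hprefix)

theorem IsInducedIso.map_lcp (hh : IsInducedIso C w v h) {x y : Word} (hx : x ∈ MCAT C w)
    (hy : y ∈ MCAT C w) : h (lcp x y) = lcp (h x) (h y) := by
  obtain ⟨hbij, hiso, -, -⟩ := hh
  have hxy := (isMeetTree_MCAT C w).lcp_mem x hx y hy
  obtain ⟨m, hm, hm_eq⟩ :=
    hbij.surjOn ((isMeetTree_MCAT C v).lcp_mem _ (hbij.mapsTo hx) _ (hbij.mapsTo hy))
  have hmx : m <+: x := (hiso m hm x hx).1.2 (hm_eq ▸ lcp_prefix_left _ _)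
  have hmy : m <+: y := (hiso m hm y hy).1.2 (hm_eq ▸ lcp_prefix_right _ _)
  apply antisymm (r := (· <+: ·))
  · exact prefix_lcp_iff_s5.2 ⟨(hiso _ hxy x hx).1.1 (lcp_prefix_left x y),
      (hiso _ hxy y hy).1.1 (lcp_prefix_right x y)⟩
  · exact hm_eq ▸ (hiso m hm _ hxy).1.1 (prefix_lcp_iff_s5.2 ⟨hmx, hmy⟩)

theorem IsInducedIso.isStretchingHom (hh : IsInducedIso C w v h) (hs : StretchCond C w h) :
    IsStretchingHom (MCAT C w) h where
  map_nil := hh.map_nil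
  map_lcp _ hx _ hy := hh.map_lcp hx hy
  map_lexLe x hx y hy := (hh.2.1 x hx y hy).2.1
  length_add_length_le x hx y hy hxy := by
    rcases eq_or_ne x y with rfl | hne
    · exact (add_comm _ _).le
    · exact hs x hx y hy hxy hne

theorem Stretch.exists_isTreeEmb (hwv : Stretch C w v) :
    ∃ g, IsTreeEmb g ∧ (∀ c ∈ C, g c = c) ∧ g ∘ w = v := by
  obtain ⟨h, hh, hs⟩ := hwv
  obtain ⟨g, hg, hgh⟩ := (hh.isStretchingHom hs).exists_isTreeEmb_eqOn (isMeetTree_MCAT C w)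
    (finite_MCAT C w)
  obtain ⟨-, -, hconst, hentry⟩ := hh
  exact ⟨g, hg, fun c hc => (hgh (const_mem_MCAT C w hc)).trans (hconst c hc),
    funext fun i => (hgh (apply_mem_MCAT C w i)).trans (hentry i)⟩

end InducedIso

theorem comp_append {α β : Type*} {m n : ℕ} (g : α → β) (u : Fin m → α) (v : Fin n → α) :
    g ∘ Fin.append u v = Fin.append (g ∘ u) (g ∘ v) := by
  ext i
  cases i using Fin.addCases <;> simp

namespace IsTreeEmb

variable {C : List Word} {k : ℕ} {g : Word → Word}

theorem image_MCAT (hg : IsTreeEmb g) (hC : ∀ c ∈ C, g c = c) (w : Fin k → Word) :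
    g '' MCAT C w = MCAT C (g ∘ w) := by
  have hget : g ∘ C.get = C.get := funext fun i => hC _ (List.get_mem C i)
  have hlist (I : Finset (Fin (k + C.length))) :
      g (listLCP (I.toList.map (Fin.append w C.get))) =
        listLCP (I.toList.map (Fin.append (g ∘ w) C.get)) := by
    rw [hg.map_listLCP, List.map_map, comp_append, hget]
  ext x
  constructor
  · rintro ⟨_, rfl | ⟨I, hI, rfl⟩, rfl⟩
    · exact .inl hg.map_nil
    · exact .inr ⟨I, hI, hlist I⟩
  · rintro (rfl | ⟨I, hI, rfl⟩)
    · exact ⟨[], .inl rfl, hg.map_nil⟩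
    · exact ⟨_, .inr ⟨I, hI, rfl⟩, hlist I⟩

theorem isInducedIso (hg : IsTreeEmb g) (hC : ∀ c ∈ C, g c = c) (w : Fin k → Word) :
    IsInducedIso C w (g ∘ w) g :=
  ⟨hg.image_MCAT hC w ▸ hg.injective.injOn.bijOn_image,
    fun _ _ _ _ => ⟨hg.prefix_iff.symm, hg.lexLe_iff.symm⟩, hC, fun _ => rfl⟩

theorem stretch (hg : IsTreeEmb g) (hC : ∀ c ∈ C, g c = c) (w : Fin k → Word) :
    Stretch C w (g ∘ w) :=
  ⟨g, hg.isInducedIso hC w, fun _ _ _ _ hde _ => hg.length_add_length_le hde⟩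

end IsTreeEmb

theorem TypeInvariant.map_isTreeEmb {C : List Word} {Q : Type*} {n : ℕ}
    {step : (Q × (Fin n → Word)) → (Q × (Fin n → Word)) → Prop} (hstep : TypeInvariant C step)
    {g : Word → Word} (hg : IsTreeEmb g) (hC : ∀ c ∈ C, g c = c) {q p : Q} {w v : Fin n → Word}
    (h : step (q, w) (p, v)) : step (q, g ∘ w) (p, g ∘ v) :=
  hstep q p w v _ _ h ⟨g, comp_append g w v ▸ hg.isInducedIso hC (Fin.append w v)⟩

theorem stmt5_general (C : List Word) {Q : Type*} {n : ℕ}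
    (step : (Q × (Fin n → Word)) → (Q × (Fin n → Word)) → Prop)
    (hstep : TypeInvariant C step) :
    (∀ c d c' : Q × (Fin n → Word), step c d → ConfigLe C c c' →
      ∃ d', ConfigLe C d d' ∧ step c' d') ∧
    (∀ c d d' : Q × (Fin n → Word), step c d → ConfigLe C d d' →
      ∃ c', ConfigLe C c c' ∧ step c' d') := by
  constructor
  · rintro ⟨q, w⟩ ⟨p, v⟩ ⟨_, w'⟩ hcd ⟨rfl, hw⟩
    obtain ⟨g, hg, hC, rfl⟩ := Stretch.exists_isTreeEmb hw
    exact ⟨(p, g ∘ v), ⟨rfl, hg.stretch hC v⟩, hstep.map_isTreeEmb hg hC hcd⟩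
  · rintro ⟨q, w⟩ ⟨p, v⟩ ⟨_, v'⟩ hcd ⟨rfl, hv⟩
    obtain ⟨g, hg, hC, rfl⟩ := Stretch.exists_isTreeEmb hv
    exact ⟨(q, g ∘ w), ⟨rfl, hg.stretch hC w⟩, hstep.map_isTreeEmb hg hC hcd⟩

/-- A type-invariant transition relation and its inverse are strongly upward compatible
with respect to `≼*`. -/
theorem stmt5 (C : List Word) (hC : ∀ c ∈ C, ∀ c' : Word, c' <+: c → c' ∈ C)
    {Q : Type*} {n : ℕ}
    (step : (Q × (Fin n → Word)) → (Q × (Fin n → Word)) → Prop)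
    (hstep : TypeInvariant C step) :
    (∀ c d c' : Q × (Fin n → Word), step c d → ConfigLe C c c' →
      ∃ d', ConfigLe C d d' ∧ step c' d') ∧
    (∀ c d d' : Q × (Fin n → Word), step c d → ConfigLe C d d' →
      ∃ c', ConfigLe C c c' ∧ step c' d') :=
  stmt5_general C step hstep

end CLTL
end
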